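/- Let H = (H₁,…,Hₙ) be an n-tuple of homogeneous polynomials of degree d ≥ 2 in z₁,…,zₙ over ℂ, and let F = z + H, i.e. Fᵢ = zᵢ + Hᵢ. If the Jacobian matrix JH = (∂Hᵢ/∂zⱼ) satisfies (JH)² = 0 (as a matrix over the polynomial ring), then G = z − H is the inverse of F under composition: Fᵢ(G₁,…,Gₙ) = zᵢ and Gᵢ(F₁,…,Fₙ) = zᵢ for all i. -/

import Mathlib

open MvPolynomial in
/-- Along the flow of a derivation `D` with `D (X j) = H j`, `D (H j) = 0`,
the polynomials `H i` are invariant. -/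
theorem flow_invariant {n : ℕ} (H : Fin n → MvPolynomial (Fin n) ℂ)
    (h0 : ∀ i, ∑ j, H j * pderiv j (H i) = 0) (c : ℂ) (i : Fin n) :
    aeval (fun j => X j + C c * H j) (H i) = H i := by
  classical
  let D : Derivation ℂ (MvPolynomial (Fin n) ℂ) (MvPolynomial (Fin n) ℂ) := mkDerivation ℂ H
  have hD : ∀ p, D p = ∑ j, H j * pderiv j p := by
    intro p
    induction p using MvPolynomial.induction_on with
    | C a => simp [D]
    | add p q hp hq => simp [hp, hq, mul_add, Finset.sum_add_distrib]
    | mul_X p k hp =>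
      rw [Derivation.leibniz, hp]
      simp [D, mkDerivation_X, pderiv_X, Pi.single_apply, mul_add, Finset.sum_add_distrib,
        Finset.mul_sum]
      congr 1
      · ring
      · exact Finset.sum_congr rfl fun j _ => by ring
  have hDH : ∀ i, D (H i) = 0 := fun i => by rw [hD, h0]
  have hDX : ∀ i, D (X i) = H i := fun i => mkDerivation_X ℂ H i
  let φ : MvPolynomial (Fin n) ℂ →ₐ[ℂ] Polynomial (MvPolynomial (Fin n) ℂ) :=
    aeval (fun j => Polynomial.C (X j) + Polynomial.X * Polynomial.C (H j))
  have hφX : ∀ j, φ (X j) = Polynomial.C (X j) + Polynomial.X * Polynomial.C (H j) :=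
    fun j => aeval_X _ j
  have key : ∀ p k, (φ p).coeff (k + 1) * ((k : MvPolynomial (Fin n) ℂ) + 1)
      = D ((φ p).coeff k) := by
    intro p
    induction p using MvPolynomial.induction_on with
    | C a =>
      have : φ (C a) = Polynomial.C (C a) := by
        rw [← algebraMap_eq, AlgHom.commutes]; rfl
      intro k
      rw [this]
      cases k with
      | zero => simp [D]
      | succ k => simp
    | add p q hp hq =>
      intro k
      rw [map_add, Polynomial.coeff_add, Polynomial.coeff_add, map_add, add_mul, hp, hq]
    | mul_X p j hp =>
      have e : φ (p * X j) = φ p * Polynomial.C (X j)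
          + φ p * Polynomial.C (H j) * Polynomial.X := by
        rw [map_mul, hφX]; ring
      intro k
      rw [e]
      have h1 := hp k
      cases k with
      | zero =>
        simp only [Polynomial.coeff_add, Polynomial.coeff_mul_C, Polynomial.coeff_mul_X,
          Polynomial.coeff_mul_X_zero, Derivation.leibniz, map_add, hDX, map_zero, smul_eq_mul]
        rw [← h1]
        push_cast
        ring
      | succ m =>
        have h2 := hp m
        simp only [Polynomial.coeff_add, Polynomial.coeff_mul_C, Polynomial.coeff_mul_X,
          Derivation.leibniz, map_add, hDX, hDH, smul_eq_mul]
        rw [← h1, ← h2]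
        push_cast
        ring
  have hcomp : ∀ (b : MvPolynomial (Fin n) ℂ) p,
      (φ p).eval b = aeval (fun j => X j + b * H j) p := by
    intro b p
    induction p using MvPolynomial.induction_on with
    | C a =>
      have : φ (C a) = Polynomial.C (C a) := by
        rw [← algebraMap_eq, AlgHom.commutes]; rfl
      rw [this]
      simp [algebraMap_eq]
    | add p q hp hq => simp [hp, hq]
    | mul_X p j hp =>
      rw [map_mul, Polynomial.eval_mul, hp, hφX, map_mul, aeval_X]
      rw [Polynomial.eval_add, Polynomial.eval_mul, Polynomial.eval_X, Polynomial.eval_C,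
        Polynomial.eval_C]
  have hc0 : (φ (H i)).coeff 0 = H i := by
    rw [Polynomial.coeff_zero_eq_eval_zero, hcomp]
    simp
  have hck : ∀ k, (φ (H i)).coeff (k + 1) = 0 := by
    intro k
    have hk : ((k : MvPolynomial (Fin n) ℂ) + 1) ≠ 0 := by exact_mod_cast Nat.succ_ne_zero k
    have := key (H i) k
    have hz : D ((φ (H i)).coeff k) = 0 := by
      induction k with
      | zero => rw [hc0, hDH]
      | succ k ih =>
        have hk' : ((k : MvPolynomial (Fin n) ℂ) + 1) ≠ 0 := by
          exact_mod_cast Nat.succ_ne_zero k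
        have h2 := key (H i) k
        rw [ih hk' h2] at h2
        rw [(mul_eq_zero.mp h2).resolve_right hk', map_zero]
    rw [hz] at this
    exact (mul_eq_zero.mp this).resolve_right hk
  have hC : φ (H i) = Polynomial.C (H i) := by
    ext1 k
    cases k with
    | zero => simp [hc0]
    | succ k => simp [hck, Polynomial.coeff_C]
  rw [← hcomp, hC, Polynomial.eval_C]


/-- if `H` is an `n`-tuple of homogeneous polynomials of degree `d ≥ 2`
with `(JH)² = 0`, then `G = z − H` is the compositional inverse of `F = z + H`. -/
theorem stmt19 {n : ℕ} (hn : 0 < n) (d : ℕ) (hd : 2 ≤ d)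
    (H : Fin n → MvPolynomial (Fin n) ℂ)
    (hH : ∀ i, (H i).IsHomogeneous d)
    (hJH : (Matrix.of fun i j => MvPolynomial.pderiv j (H i)) *
        (Matrix.of fun i j => MvPolynomial.pderiv j (H i)) = 0) :
    ∀ i, MvPolynomial.aeval (fun j => MvPolynomial.X j - H j)
          (MvPolynomial.X i + H i) = MvPolynomial.X i ∧
      MvPolynomial.aeval (fun j => MvPolynomial.X j + H j)
          (MvPolynomial.X i - H i) = MvPolynomial.X i := by
  have h0 : ∀ i, ∑ j, H j * MvPolynomial.pderiv j (H i) = 0 := by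
    intro i
    have hE : ∀ j, ∑ k, MvPolynomial.X k * MvPolynomial.pderiv k (H j) = d • H j :=
      fun j => (hH j).sum_X_mul_pderiv
    have h1 : d • ∑ j, H j * MvPolynomial.pderiv j (H i) = 0 := by
      calc d • ∑ j, H j * MvPolynomial.pderiv j (H i)
          = ∑ j, (∑ k, MvPolynomial.X k * MvPolynomial.pderiv k (H j))
              * MvPolynomial.pderiv j (H i) := by
            rw [Finset.smul_sum]
            exact Finset.sum_congr rfl fun j _ => by rw [hE, smul_mul_assoc]
        _ = ∑ k, MvPolynomial.X k *
              ∑ j, MvPolynomial.pderiv j (H i) * MvPolynomial.pderiv k (H j) := by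
            simp_rw [Finset.sum_mul, Finset.mul_sum]
            rw [Finset.sum_comm]
            exact Finset.sum_congr rfl fun k _ => Finset.sum_congr rfl fun j _ => by ring
        _ = 0 := by
            refine Finset.sum_eq_zero fun k _ => ?_
            have := congrFun (congrFun hJH i) k
            simp only [Matrix.mul_apply, Matrix.of_apply, Matrix.zero_apply] at this
            rw [this, mul_zero]
    exact (smul_eq_zero.mp h1).resolve_left (by omega)
  intro i
  have hp := flow_invariant H h0 1 i
  have hm := flow_invariant H h0 (-1) i
  simp only [map_one, one_mul, map_neg, neg_mul, ← sub_eq_add_neg] at hp hm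
  constructor
  · rw [map_add, hm, MvPolynomial.aeval_X, sub_add_cancel]
  · rw [map_sub, hp, MvPolynomial.aeval_X, add_sub_cancel_right]
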